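/- arXiv:2406.09465 — 2 statements merged into one kernel-verified Lean document; each statement's English description precedes it below -/
import Mathlib

section
/- Let G = (P, E) be a finite directed acyclic graph. A set of nodes P' ⊆ P forms a convex subgraph of G if and only if there exist two execution states P₁ and P₂ of G such that P' = P₁ \ P₂. -/
/-!
Order the nodes by reachability. Execution states are then the lower sets and convex subgraphs the
order-connected sets. In a preorder, an order-connected set is the intersection of its lower
closure with its upper closure, that is, the difference of its lower closure and the complement of
its upper closure, and this complement is again a lower set.
-/

/-- `X` is an execution state of the directed graph with edge relation `E`:
for every edge `(p₁, p₂)`, if `p₂ ∈ X` then `p₁ ∈ X`. -/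
def ExecState {V : Type*} (E : V → V → Prop) (X : Set V) : Prop :=
  ∀ p₁ p₂, E p₁ p₂ → p₂ ∈ X → p₁ ∈ X

/-- `P'` is a convex subgraph: there are no `p₁, p₂ ∈ P'` and `q ∉ P'` with
`p₁ ⤳ q` and `q ⤳ p₂` (reachability is the reflexive-transitive closure of `E`). -/
def ConvexSubgraph {V : Type*} (E : V → V → Prop) (P' : Set V) : Prop :=
  ¬ ∃ p₁ p₂ q, p₁ ∈ P' ∧ p₂ ∈ P' ∧ q ∉ P' ∧
    Relation.ReflTransGen E p₁ q ∧ Relation.ReflTransGen E q p₂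

theorem ordConnected_iff_exists_isLowerSet_diff {α : Type*} [Preorder α] {s : Set α} :
    s.OrdConnected ↔ ∃ t u : Set α, IsLowerSet t ∧ IsLowerSet u ∧ s = t \ u := by
  constructor
  · intro hs
    refine ⟨lowerClosure s, (upperClosure s : Set α)ᶜ, (lowerClosure s).lower,
      (upperClosure s).upper.compl, ?_⟩
    rw [Set.sdiff_compl, Set.inter_comm, hs.upperClosure_inter_lowerClosure]
  · rintro ⟨t, u, ht, hu, rfl⟩
    exact ht.ordConnected.inter hu.compl.ordConnected

section Reachability

variable {V : Type*} (E : V → V → Prop)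

/-- The reachability preorder of the directed graph with edge relation `E`, in which `x ≤ y` means
`x ⤳ y`. It translates statements about the graph into order theory. It is not an instance, since
`V` does not determine `E`. -/
abbrev reachabilityPreorder : Preorder V where
  le := Relation.ReflTransGen E
  le_refl _ := .refl
  le_trans _ _ _ := .trans

theorem execState_iff_isLowerSet (X : Set V) :
    ExecState E X ↔ letI := reachabilityPreorder E; IsLowerSet X := by
  constructor
  · intro hX y x hxy hy
    induction hxy using Relation.ReflTransGen.head_induction_on with
    | refl => exact hy
    | head hab _ hb => exact hX _ _ hab hb
  · intro hX p₁ p₂ hE hp₂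
    exact hX (.single hE) hp₂

theorem convexSubgraph_iff_ordConnected (P' : Set V) :
    ConvexSubgraph E P' ↔ letI := reachabilityPreorder E; P'.OrdConnected := by
  let := reachabilityPreorder E
  constructor
  · intro h
    refine ⟨fun p₁ hp₁ p₂ hp₂ q ⟨hp₁q, hqp₂⟩ => ?_⟩
    by_contra hq
    exact h ⟨p₁, p₂, q, hp₁, hp₂, hq, hp₁q, hqp₂⟩
  · rintro h ⟨p₁, p₂, q, hp₁, hp₂, hq, hp₁q, hqp₂⟩
    exact hq (h.out hp₁ hp₂ ⟨hp₁q, hqp₂⟩)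

theorem convexSubgraph_iff_diff_execStates_general (P' : Set V) :
    ConvexSubgraph E P' ↔
      ∃ P₁ P₂ : Set V, ExecState E P₁ ∧ ExecState E P₂ ∧ P' = P₁ \ P₂ := by
  let := reachabilityPreorder E
  simp only [convexSubgraph_iff_ordConnected, execState_iff_isLowerSet]
  exact ordConnected_iff_exists_isLowerSet_diff

end Reachability

/-- A set of nodes of a finite DAG forms a convex subgraph iff it is the
difference of two execution states. -/
theorem convexSubgraph_iff_diff_execStates {V : Type*} [Fintype V] (E : V → V → Prop)
    (hacyclic : ∀ x y, Relation.ReflTransGen E x y → Relation.ReflTransGen E y x → x = y)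
    (P' : Set V) :
    ConvexSubgraph E P' ↔
      ∃ P₁ P₂ : Set V, ExecState E P₁ ∧ ExecState E P₂ ∧ P' = P₁ \ P₂ :=
  convexSubgraph_iff_diff_execStates_general E P'
end

section
/- Let G = (P, E) be a finite directed acyclic graph. If P' ⊆ P is a convex subgraph of G, then there exist execution states P₁ and P₂ of G with P' = P₁ \ P₂; concretely, one may take P₁ to be the union of P' with all nodes from which some node of P' is reachable, and P₂ to be the set of all nodes from which some node of S is reachable, where S = {p ∈ P \ P' : there exists an edge (p, p') ∈ E with p' ∈ P'}. -/
section Ancestors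

variable {V : Type*} {E : V → V → Prop} {A X : Set V}

/-- The ancestors of a set `A` of nodes: the nodes from which some node of `A` is reachable. Paths
may be empty, so every node of `A` is one of its own ancestors. This makes `ancestors E A` the least
execution state containing `A`. -/
def ancestors (E : V → V → Prop) (A : Set V) : Set V :=
  {p | ∃ a ∈ A, Relation.ReflTransGen E p a}

/-- The sources of the edges entering `A` from outside, written `S` in the theorem: the nodes
through which a path must pass immediately before it enters `A`. -/
def entrySources (E : V → V → Prop) (A : Set V) : Set V :=
  {p | p ∉ A ∧ ∃ a ∈ A, E p a}

theorem subset_ancestors : A ⊆ ancestors E A :=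
  fun a ha ↦ ⟨a, ha, .refl⟩

theorem execState_ancestors : ExecState E (ancestors E A) :=
  fun _ _ hedge ⟨a, ha, hpath⟩ ↦ ⟨a, ha, .head hedge hpath⟩

theorem ExecState.ancestors_subset (hX : ExecState E X) (hAX : A ⊆ X) : ancestors E A ⊆ X := by
  rintro p ⟨a, ha, hpath⟩
  induction hpath using Relation.ReflTransGen.head_induction_on with
  | refl => exact hAX ha
  | head hedge _ ih => exact hX _ _ hedge ih

theorem entrySources_subset_ancestors : entrySources E A ⊆ ancestors E A :=
  fun _ ⟨_, a, ha, hedge⟩ ↦ ⟨a, ha, .single hedge⟩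

theorem execState_union_ancestors_entrySources :
    ExecState E (A ∪ ancestors E (entrySources E A)) := by
  rintro p q hedge (hq | hq)
  · by_cases hp : p ∈ A
    · exact .inl hp
    · exact .inr (subset_ancestors ⟨hp, q, hq, hedge⟩)
  · exact .inr (execState_ancestors p q hedge hq)

theorem union_ancestors_entrySources :
    A ∪ ancestors E (entrySources E A) = ancestors E A :=
  (Set.union_subset subset_ancestors
      (execState_ancestors.ancestors_subset entrySources_subset_ancestors)).antisymm
    (execState_union_ancestors_entrySources.ancestors_subset Set.subset_union_left)

theorem ConvexSubgraph.disjoint_ancestors_entrySources (hA : ConvexSubgraph E A) :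
    Disjoint A (ancestors E (entrySources E A)) := by
  rw [Set.disjoint_left]
  rintro p hp ⟨s, ⟨hs, a, ha, hedge⟩, hpath⟩
  exact hA ⟨p, a, s, hp, ha, hs, hpath, .single hedge⟩

theorem ConvexSubgraph.ancestors_sdiff_ancestors_entrySources (hA : ConvexSubgraph E A) :
    ancestors E A \ ancestors E (entrySources E A) = A := by
  rw [← union_ancestors_entrySources, Set.union_sdiff_cancel_right]
  exact hA.disjoint_ancestors_entrySources.le_bot

theorem convexSubgraph_eq_diff_execStates_general (hA : ConvexSubgraph E A) :
    ExecState E (A ∪ ancestors E A) ∧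
    ExecState E (ancestors E (entrySources E A)) ∧
    A = (A ∪ ancestors E A) \ ancestors E (entrySources E A) := by
  rw [Set.union_eq_right.mpr subset_ancestors]
  exact ⟨execState_ancestors, execState_ancestors, hA.ancestors_sdiff_ancestors_entrySources.symm⟩

end Ancestors

/-- In a finite DAG, a convex subgraph `P'` is the difference of two concrete
execution states: `P₁ = P' ∪ {nodes from which some node of P' is reachable}` and
`P₂ = {nodes from which some node of S is reachable}`, where
`S = {p ∉ P' : ∃ edge (p, p') ∈ E with p' ∈ P'}`. -/
theorem convexSubgraph_eq_diff_execStates {V : Type*} [Fintype V] (E : V → V → Prop)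
    (hacyclic : ∀ x y, Relation.ReflTransGen E x y → Relation.ReflTransGen E y x → x = y)
    (P' : Set V) (hconv : ConvexSubgraph E P') :
    ExecState E (P' ∪ {p | ∃ p' ∈ P', Relation.ReflTransGen E p p'}) ∧
    ExecState E {p | ∃ s ∈ ({p | p ∉ P' ∧ ∃ p' ∈ P', E p p'} : Set V),
      Relation.ReflTransGen E p s} ∧
    P' = (P' ∪ {p | ∃ p' ∈ P', Relation.ReflTransGen E p p'}) \
      {p | ∃ s ∈ ({p | p ∉ P' ∧ ∃ p' ∈ P', E p p'} : Set V),
        Relation.ReflTransGen E p s} :=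
  convexSubgraph_eq_diff_execStates_general hconv
end
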